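/- arXiv:1704.03798 — 4 statements merged into one kernel-verified Lean document; each statement's English description precedes it below -/
import Mathlib

section
/- Every maximal integral curve of the Hamiltonian vector field H_p is defined on all of ℝ; that is, the Hamiltonian flow of p(x,ξ) = ‖ξ‖² + V(x) is complete on ℝⁿ × ℝⁿ. -/
open Filter Set
open scoped Topology RealInnerProductSpace

noncomputable section

/-- The phase space `ℝⁿ × ℝⁿ`. -/
abbrev Phase (n : ℕ) : Type := EuclideanSpace ℝ (Fin n) × EuclideanSpace ℝ (Fin n)

/-- The classical Hamiltonian `p(x, ξ) = ‖ξ‖² + V(x)`. -/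
def ham {n : ℕ} (V : EuclideanSpace ℝ (Fin n) → ℝ) (ρ : Phase n) : ℝ :=
  ‖ρ.2‖ ^ 2 + V ρ.1

/-- The Hamiltonian vector field `H_p(x, ξ) = (2ξ, -∇V(x))`. -/
def hamVF {n : ℕ} (V : EuclideanSpace ℝ (Fin n) → ℝ) (ρ : Phase n) : Phase n :=
  ((2 : ℝ) • ρ.2, -gradient V ρ.1)

/-- `Φ` is the (complete) flow of the Hamiltonian vector field `H_p`:
it starts at the identity, satisfies the group law, and each curve
`t ↦ Φ t ρ` is an integral curve of `H_p`. -/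
def IsHamFlow {n : ℕ} (V : EuclideanSpace ℝ (Fin n) → ℝ)
    (Φ : ℝ → Phase n → Phase n) : Prop :=
  (∀ ρ, Φ 0 ρ = ρ) ∧ (∀ s t ρ, Φ (s + t) ρ = Φ s (Φ t ρ)) ∧
    ∀ ρ t, HasDerivAt (fun s => Φ s ρ) (hamVF V (Φ t ρ)) t

/-- The outgoing tail `Γ₋(E)`: points of the energy surface whose forward
trajectory does not escape to infinity. -/
def GammaMinus {n : ℕ} (V : EuclideanSpace ℝ (Fin n) → ℝ)
    (Φ : ℝ → Phase n → Phase n) (E : ℝ) : Set (Phase n) :=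
  {ρ | ham V ρ = E ∧ ¬ Tendsto (fun t => ‖Φ t ρ‖) atTop atTop}

/-- The incoming tail `Γ₊(E)`: points of the energy surface whose backward
trajectory does not escape to infinity. -/
def GammaPlus {n : ℕ} (V : EuclideanSpace ℝ (Fin n) → ℝ)
    (Φ : ℝ → Phase n → Phase n) (E : ℝ) : Set (Phase n) :=
  {ρ | ham V ρ = E ∧ ¬ Tendsto (fun t => ‖Φ t ρ‖) atBot atTop}

/-- The trapped set `K(E) = Γ₋(E) ∩ Γ₊(E)`. -/
def trappedSet {n : ℕ} (V : EuclideanSpace ℝ (Fin n) → ℝ)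
    (Φ : ℝ → Phase n → Phase n) (E : ℝ) : Set (Phase n) :=
  GammaMinus V Φ E ∩ GammaPlus V Φ E

/-!
The gradient of `V` is `C¹` with compact support, hence Lipschitz, and so `H_p` is Lipschitz with
some constant `K`. Within distance `‖H_p ρ‖` of `ρ` the speed is at most `(1 + K) ‖H_p ρ‖`, so
Picard–Lindelöf gives an integral curve through `ρ` for times `|t| < (1 + K)⁻¹`. This lifespan does
not depend on `ρ`, so integral curves can always be prolonged and none blows up in finite time. By
uniqueness, an integral curve on an interval agrees with the global one through any of its points.
-/

section LipschitzField

lemma norm_apply_le_of_lipschitzWith {E F : Type*} [SeminormedAddCommGroup E]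
    [SeminormedAddCommGroup F] {f : E → F} {K : NNReal} (hK : LipschitzWith K f) (x y : E) :
    ‖f y‖ ≤ ‖f x‖ + K * ‖y - x‖ :=
  (norm_le_norm_add_norm_sub' (f y) (f x)).trans (by gcongr; exact hK.norm_sub_le y x)

variable {E : Type*} [NormedAddCommGroup E] {v : E → E} {K : NNReal}

lemma isPicardLindelof_of_lipschitzWith (hK : LipschitzWith K v) (x : E) :
    IsPicardLindelof (fun _ ↦ v) (tmin := -(1 + K : ℝ)⁻¹) (tmax := (1 + K : ℝ)⁻¹)
      ⟨0, neg_nonpos.2 (by positivity), by positivity⟩ x ‖v x‖₊ 0 ((1 + K) * ‖v x‖₊) K := by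
  refine .of_time_independent (fun y hy ↦ ?_) hK.lipschitzOnWith ?_
  · have hyx : ‖y - x‖ ≤ ‖v x‖ := mem_closedBall_iff_norm.1 hy
    calc
      ‖v y‖ ≤ ‖v x‖ + K * ‖y - x‖ := norm_apply_le_of_lipschitzWith hK x y
      _ ≤ ‖v x‖ + K * ‖v x‖ := by gcongr
      _ = ((1 + K) * ‖v x‖₊ : NNReal) := by push_cast; ring
  · simp [field]

variable [NormedSpace ℝ E]

lemma isMIntegralCurveOn_iff_isIntegralCurveOn {γ : ℝ → E} {s : Set ℝ} :
    IsMIntegralCurveOn (I := modelWithCornersSelf ℝ E) γ v s ↔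
      IsIntegralCurveOn γ (fun _ ↦ v) s := by
  refine forall₂_congr fun t _ ↦ ?_
  rw [hasDerivWithinAt_iff_hasFDerivWithinAt,
    ← ContinuousLinearMap.smulRight_one_eq_toSpanSingleton]
  exact hasMFDerivWithinAt_iff_hasFDerivWithinAt

lemma eqOn_Ioo_of_isIntegralCurveOn_of_lipschitzWith (hK : LipschitzWith K v) {γ δ : ℝ → E}
    {a b t₀ : ℝ} (ht₀ : t₀ ∈ Ioo a b) (hγ : IsIntegralCurveOn γ (fun _ ↦ v) (Ioo a b))
    (hδ : IsIntegralCurveOn δ (fun _ ↦ v) (Ioo a b)) (h : γ t₀ = δ t₀) :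
    EqOn γ δ (Ioo a b) :=
  ODE_solution_unique_of_mem_Ioo (v := fun _ ↦ v) (s := fun _ ↦ univ)
    (fun _ _ ↦ hK.lipschitzOnWith) ht₀
    (fun t ht ↦ ⟨(hγ t ht).hasDerivAt (isOpen_Ioo.mem_nhds ht), mem_univ _⟩)
    (fun t ht ↦ ⟨(hδ t ht).hasDerivAt (isOpen_Ioo.mem_nhds ht), mem_univ _⟩) h

variable [CompleteSpace E]

lemma exists_isIntegralCurveOn_Ioo_of_lipschitzWith (hK : LipschitzWith K v) (x : E) :
    ∃ γ : ℝ → E, γ 0 = x ∧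
      IsIntegralCurveOn γ (fun _ ↦ v) (Ioo (-(1 + K : ℝ)⁻¹) (1 + K : ℝ)⁻¹) := by
  obtain ⟨γ, hγ₀, hγ⟩ :=
    (isPicardLindelof_of_lipschitzWith hK x).exists_eq_forall_mem_Icc_hasDerivWithinAt₀
  exact ⟨γ, hγ₀, IsIntegralCurveOn.mono hγ Ioo_subset_Icc_self⟩

lemma exists_isIntegralCurve_of_contDiff_of_lipschitzWith (hv : ContDiff ℝ 1 v)
    (hK : LipschitzWith K v) (t₀ : ℝ) (x : E) :
    ∃ γ : ℝ → E, γ t₀ = x ∧ IsIntegralCurve γ fun _ ↦ v := by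
  obtain ⟨γ, hγ₀, hγ⟩ := exists_isMIntegralCurve_of_isMIntegralCurveOn
    (I := modelWithCornersSelf ℝ E) (contMDiff_vectorSpace_iff_contDiff.2 hv)
    (by positivity : (0 : ℝ) < (1 + K : ℝ)⁻¹)
    (fun y ↦ (exists_isIntegralCurveOn_Ioo_of_lipschitzWith hK y).imp fun _ ↦
      And.imp_right isMIntegralCurveOn_iff_isIntegralCurveOn.2) x
  have hglobal : IsIntegralCurve γ fun _ ↦ v := isIntegralCurveOn_univ.1 <|
    isMIntegralCurveOn_iff_isIntegralCurveOn.1 (hγ.isMIntegralCurveOn univ)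
  exact ⟨γ ∘ (· - t₀), by simp [hγ₀], hglobal.comp_sub t₀⟩

lemma exists_isIntegralCurve_eqOn_Ioo_of_contDiff_of_lipschitzWith (hv : ContDiff ℝ 1 v)
    (hK : LipschitzWith K v) {γ : ℝ → E} {a b : ℝ}
    (hγ : IsIntegralCurveOn γ (fun _ ↦ v) (Ioo a b)) :
    ∃ δ : ℝ → E, IsIntegralCurve δ (fun _ ↦ v) ∧ EqOn γ δ (Ioo a b) := by
  rcases (Ioo a b).eq_empty_or_nonempty with hempty | ⟨t₀, ht₀⟩
  · obtain ⟨δ, -, hδ⟩ := exists_isIntegralCurve_of_contDiff_of_lipschitzWith hv hK 0 0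
    exact ⟨δ, hδ, hempty ▸ eqOn_empty γ δ⟩
  · obtain ⟨δ, hδ₀, hδ⟩ := exists_isIntegralCurve_of_contDiff_of_lipschitzWith hv hK t₀ (γ t₀)
    exact ⟨δ, hδ, eqOn_Ioo_of_isIntegralCurveOn_of_lipschitzWith hK ht₀ hγ
      (hδ.isIntegralCurveOn _) hδ₀.symm⟩

end LipschitzField

section Gradient

lemma hasCompactSupport_gradient {𝕜 F : Type*} [RCLike 𝕜] [NormedAddCommGroup F]
    [InnerProductSpace 𝕜 F] [CompleteSpace F] {f : F → 𝕜} (hf : HasCompactSupport f) :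
    HasCompactSupport (gradient f) :=
  (hf.fderiv 𝕜).comp_left (map_zero (InnerProductSpace.toDual 𝕜 F).symm)

variable {F : Type*} [NormedAddCommGroup F] [InnerProductSpace ℝ F] [CompleteSpace F] {f : F → ℝ}

lemma contDiff_gradient {m k : WithTop ℕ∞} (hf : ContDiff ℝ k f) (hmk : m + 1 ≤ k) :
    ContDiff ℝ m (gradient f) :=
  (InnerProductSpace.toDual ℝ F).symm.contDiff.comp (hf.fderiv_right hmk)

lemma exists_lipschitzWith_gradient_of_hasCompactSupport (hf : ContDiff ℝ 2 f)
    (hsupp : HasCompactSupport f) : ∃ K, LipschitzWith K (gradient f) :=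
  (contDiff_gradient hf one_add_one_eq_two.le).lipschitzWith_of_hasCompactSupport
    (hasCompactSupport_gradient hsupp) one_ne_zero

end Gradient

section HamiltonianField

variable {n : ℕ} {V : EuclideanSpace ℝ (Fin n) → ℝ}

lemma contDiff_hamVF {m k : WithTop ℕ∞} (hV : ContDiff ℝ k V) (hmk : m + 1 ≤ k) :
    ContDiff ℝ m (hamVF V) :=
  (contDiff_snd.const_smul (2 : ℝ)).prodMk ((contDiff_gradient hV hmk).comp contDiff_fst).neg

lemma lipschitzWith_hamVF {K : NNReal} (hK : LipschitzWith K (gradient V)) :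
    LipschitzWith (max 2 K) (hamVF V) := by
  have hvelocity : LipschitzWith 2 fun ρ : Phase n ↦ (2 : ℝ) • ρ.2 := by
    simpa [Function.comp_def] using (lipschitzWith_smul (2 : ℝ)).comp LipschitzWith.prod_snd
  have hgradient : LipschitzWith K fun ρ : Phase n ↦ gradient V ρ.1 := by
    simpa [Function.comp_def] using
      hK.comp (LipschitzWith.prod_fst (β := EuclideanSpace ℝ (Fin n)))
  exact hvelocity.prodMk hgradient.neg

end HamiltonianField

theorem hamiltonian_flow_complete_general {n : ℕ} {V : EuclideanSpace ℝ (Fin n) → ℝ} {K : NNReal}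
    (hV : ContDiff ℝ 2 V) (hK : LipschitzWith K (gradient V)) :
    (∀ ρ : Phase n, ∃ γ : ℝ → Phase n, γ 0 = ρ ∧
        ∀ t : ℝ, HasDerivAt γ (hamVF V (γ t)) t) ∧
      ∀ (a b : ℝ) (γ : ℝ → Phase n),
        (∀ t ∈ Ioo a b, HasDerivAt γ (hamVF V (γ t)) t) →
          ∃ δ : ℝ → Phase n, (∀ t : ℝ, HasDerivAt δ (hamVF V (δ t)) t) ∧
            EqOn γ δ (Ioo a b) := by
  have hfield : ContDiff ℝ 1 (hamVF V) := contDiff_hamVF hV one_add_one_eq_two.le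
  have hlip : LipschitzWith (max 2 K) (hamVF V) := lipschitzWith_hamVF hK
  exact ⟨exists_isIntegralCurve_of_contDiff_of_lipschitzWith hfield hlip 0, fun a b γ hγ ↦
    exists_isIntegralCurve_eqOn_Ioo_of_contDiff_of_lipschitzWith hfield hlip
      fun t ht ↦ (hγ t ht).hasDerivWithinAt⟩

/-- Every maximal integral curve of the Hamiltonian vector field `H_p` is defined
on all of `ℝ`: through every point there is a global integral curve, and every
integral curve on an open interval is the restriction of a global one. -/
theorem hamiltonian_flow_complete (n : ℕ) (hn : 1 ≤ n)
    (V : EuclideanSpace ℝ (Fin n) → ℝ) (hV : ContDiff ℝ (⊤ : ℕ∞) V)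
    (hVsupp : HasCompactSupport V) :
    (∀ ρ : Phase n, ∃ γ : ℝ → Phase n, γ 0 = ρ ∧
        ∀ t : ℝ, HasDerivAt γ (hamVF V (γ t)) t) ∧
      ∀ (a b : ℝ) (γ : ℝ → Phase n),
        (∀ t ∈ Ioo a b, HasDerivAt γ (hamVF V (γ t)) t) →
          ∃ δ : ℝ → Phase n, (∀ t : ℝ, HasDerivAt δ (hamVF V (δ t)) t) ∧
            EqOn γ δ (Ioo a b) := by
  have hV₂ : ContDiff ℝ 2 V := hV.of_le (by norm_cast)
  obtain ⟨K, hK⟩ := exists_lipschitzWith_gradient_of_hasCompactSupport hV₂ hVsupp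
  exact hamiltonian_flow_complete_general hV₂ hK
end
end

section
/- Escape lemma: let R > 0 be such that supp V ⊆ B(0,R) (the open ball). If (x₀,ξ₀) satisfies ‖x₀‖ ≥ R, ⟨x₀, ξ₀⟩ ≥ 0 and p(x₀,ξ₀) = E with E > 0, then for all t ≥ 0 the trajectory is free, Φ_t(x₀,ξ₀) = (x₀ + 2tξ₀, ξ₀), and ‖x₀ + 2tξ₀‖² = ‖x₀‖² + 4t⟨x₀,ξ₀⟩ + 4t²E; in particular ‖Φ_t(x₀,ξ₀)‖ → ∞ as t → +∞. -/
open Filter Set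
open scoped Topology RealInnerProductSpace

noncomputable section

/-!
For `t ≥ 0` the outgoing ray `x₀ + 2tξ₀` never re-enters the ball `B(0, R)`, because its squared
norm `‖x₀‖² + 4t⟪x₀, ξ₀⟫ + 4t²‖ξ₀‖²` is at least `‖x₀‖²`. It therefore stays in the open complement
of the support of `V`, where the Hamiltonian vector field is `(x, ξ) ↦ (2ξ, 0)`, so that the free
motion is an integral curve. A continuity argument shows that every integral curve with the same
initial condition agrees with it: as long as the two agree, the other curve also remains in the
open set where the field is Lipschitz.
-/

section Uniqueness

variable {F : Type*} [NormedAddCommGroup F] [NormedSpace ℝ F]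
  {v : ℝ → F → F} {f g : ℝ → F} {a b : ℝ}

theorem hasDerivWithinAt_Ici_of_isIntegralCurveOn_Icc (hf : IsIntegralCurveOn f v (Icc a b))
    {t : ℝ} (ht : t ∈ Ico a b) : HasDerivWithinAt f (v t (f t)) (Ici t) t :=
  (hf t (Ico_subset_Icc_self ht)).mono_of_mem_nhdsWithin (Icc_mem_nhdsGE_of_mem ht)

theorem eqOn_Icc_of_isIntegralCurveOn_of_mapsTo_isOpen {K : NNReal} {U : Set F} (hU : IsOpen U)
    (hv : ∀ t ∈ Ico a b, LipschitzOnWith K (v t) U)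
    (hf : IsIntegralCurveOn f v (Icc a b)) (hg : IsIntegralCurveOn g v (Icc a b))
    (hgU : MapsTo g (Ico a b) U) (ha : f a = g a) :
    EqOn f g (Icc a b) := by
  have hclosed : IsClosed ({t | f t = g t} ∩ Icc a b) := by
    rw [inter_comm]
    exact (hf.continuousOn.prodMk hg.continuousOn).preimage_isClosed_of_isClosed
      isClosed_Icc isClosed_diagonal
  refine hclosed.Icc_subset_of_forall_mem_nhdsWithin ha ?_
  rintro t ⟨hfg : f t = g t, ht⟩
  have hfU : f ⁻¹' U ∈ 𝓝[≥] t :=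
    (hasDerivWithinAt_Ici_of_isIntegralCurveOn_Icc hf ht).continuousWithinAt
      (hU.mem_nhds (hfg ▸ hgU ht))
  obtain ⟨c, ⟨htc, hcb⟩, hcU⟩ := (mem_nhdsGE_iff_exists_mem_Ioc_Ico_subset ht.2).1 hfU
  have hIcc : Icc t c ⊆ Icc a b := Icc_subset_Icc ht.1 hcb
  have hIco : Ico t c ⊆ Ico a b := Ico_subset_Ico ht.1 hcb
  have heq : EqOn f g (Icc t c) :=
    ODE_solution_unique_of_mem_Icc_right (fun s hs => hv s (hIco hs))
      (hf.continuousOn.mono hIcc)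
      (fun s hs => hasDerivWithinAt_Ici_of_isIntegralCurveOn_Icc hf (hIco hs))
      hcU
      (hg.continuousOn.mono hIcc)
      (fun s hs => hasDerivWithinAt_Ici_of_isIntegralCurveOn_Icc hg (hIco hs))
      (fun s hs => hgU (hIco hs)) hfg
  exact mem_of_superset (Icc_mem_nhdsGT htc) heq

end Uniqueness

section FreeMotion

variable {F : Type*} [NormedAddCommGroup F] [NormedSpace ℝ F]

theorem tendsto_norm_add_smul_atTop (x : F) {ξ : F} (hξ : ξ ≠ 0) :
    Tendsto (fun c : ℝ => ‖x + c • ξ‖) atTop atTop := by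
  have hlin : Tendsto (fun c : ℝ => c * ‖ξ‖ - ‖x‖) atTop atTop :=
    tendsto_atTop_add_const_right _ _ (tendsto_id.atTop_mul_const (norm_pos_iff.2 hξ))
  refine tendsto_atTop_mono (fun c => ?_) hlin
  calc c * ‖ξ‖ - ‖x‖ ≤ ‖c • ξ‖ - ‖x‖ := by
        rw [norm_smul]
        gcongr
        exact Real.le_norm_self c
    _ ≤ ‖x + c • ξ‖ := by
        rw [add_comm]
        exact norm_sub_le_norm_add _ _

/-- The free trajectory `t ↦ (x + 2tξ, ξ)`, the motion generated by the Hamiltonian `‖ξ‖²`. -/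
def freeMotion (x ξ : F) (t : ℝ) : F × F :=
  (x + (2 * t) • ξ, ξ)

theorem hasDerivAt_freeMotion (x ξ : F) (t : ℝ) :
    HasDerivAt (freeMotion x ξ) ((2 : ℝ) • ξ, 0) t := by
  have hpos : HasDerivAt (fun s : ℝ => x + (2 * s) • ξ) ((2 : ℝ) • ξ) t := by
    simpa using (((hasDerivAt_id t).const_mul 2).smul_const ξ).const_add x
  exact hpos.prodMk (hasDerivAt_const t ξ)

theorem tendsto_norm_freeMotion_atTop (x : F) {ξ : F} (hξ : ξ ≠ 0) :
    Tendsto (fun t => ‖freeMotion x ξ t‖) atTop atTop :=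
  tendsto_atTop_mono (fun t => norm_fst_le (freeMotion x ξ t))
    ((tendsto_norm_add_smul_atTop x hξ).comp (tendsto_id.const_mul_atTop two_pos))

end FreeMotion

section OutgoingRay

variable {H : Type*} [NormedAddCommGroup H] [InnerProductSpace ℝ H]

theorem norm_add_smul_sq_real (x ξ : H) (c : ℝ) :
    ‖x + c • ξ‖ ^ 2 = ‖x‖ ^ 2 + 2 * c * ⟪x, ξ⟫ + c ^ 2 * ‖ξ‖ ^ 2 := by
  rw [norm_add_sq_real, real_inner_smul_right, norm_smul, mul_pow, Real.norm_eq_abs, sq_abs,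
    mul_assoc]

theorem norm_le_norm_add_smul_of_inner_nonneg {x ξ : H} (hout : 0 ≤ ⟪x, ξ⟫) {c : ℝ} (hc : 0 ≤ c) :
    ‖x‖ ≤ ‖x + c • ξ‖ := by
  refine le_of_sq_le_sq ?_ (norm_nonneg _)
  rw [norm_add_smul_sq_real, add_assoc]
  exact le_add_of_nonneg_right (by positivity)

end OutgoingRay

section HamiltonianField

variable {H : Type*} [NormedAddCommGroup H] [InnerProductSpace ℝ H] [CompleteSpace H] {V : H → ℝ}

/-- The vector field `(x, ξ) ↦ (2ξ, -∇V(x))` of the Hamiltonian `‖ξ‖² + V(x)` on the phase space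
`H × H` of a real Hilbert space `H`. For `H = ℝⁿ` it is `hamVF V`. -/
def hilbertHamVF (V : H → ℝ) (ρ : H × H) : H × H :=
  ((2 : ℝ) • ρ.2, -gradient V ρ.1)

theorem hilbertHamVF_of_notMem_tsupport {ρ : H × H} (hρ : ρ.1 ∉ tsupport V) :
    hilbertHamVF V ρ = ((2 : ℝ) • ρ.2, 0) := by
  rw [hilbertHamVF, gradient, fderiv_of_notMem_tsupport ℝ hρ, map_zero, neg_zero]

theorem lipschitzOnWith_hilbertHamVF_compl_tsupport (V : H → ℝ) :
    LipschitzOnWith 2 (hilbertHamVF V) (Prod.fst ⁻¹' (tsupport V)ᶜ) := by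
  have hfree : LipschitzWith 2 (fun ρ : H × H => ((2 : ℝ) • ρ.2, (0 : H))) := by
    simpa using ((lipschitzWith_smul (2 : ℝ)).comp LipschitzWith.prod_snd).prodMk
      (LipschitzWith.const (0 : H))
  intro ρ hρ σ hσ
  rw [hilbertHamVF_of_notMem_tsupport hρ, hilbertHamVF_of_notMem_tsupport hσ]
  exact hfree ρ σ

theorem isIntegralCurveOn_freeMotion {x ξ : H} {s : Set ℝ}
    (hray : ∀ t ∈ s, x + (2 * t) • ξ ∉ tsupport V) :
    IsIntegralCurveOn (freeMotion x ξ) (fun _ => hilbertHamVF V) s := by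
  intro t ht
  have hfield : hilbertHamVF V (freeMotion x ξ t) = ((2 : ℝ) • ξ, 0) :=
    hilbertHamVF_of_notMem_tsupport (hray t ht)
  simpa only [hfield] using (hasDerivAt_freeMotion x ξ t).hasDerivWithinAt

theorem eqOn_freeMotion_of_forall_notMem_tsupport {γ : ℝ → H × H} {x ξ : H}
    (hγ : IsIntegralCurveOn γ (fun _ => hilbertHamVF V) (Ici 0)) (hγ₀ : γ 0 = (x, ξ))
    (hray : ∀ t ∈ Ici (0 : ℝ), x + (2 * t) • ξ ∉ tsupport V) :
    EqOn γ (freeMotion x ξ) (Ici 0) := by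
  intro T hT
  have hopen : IsOpen (Prod.fst ⁻¹' (tsupport V)ᶜ : Set (H × H)) :=
    (isClosed_tsupport V).isOpen_compl.preimage continuous_fst
  have hinit : γ 0 = freeMotion x ξ 0 := by simp [hγ₀, freeMotion]
  exact eqOn_Icc_of_isIntegralCurveOn_of_mapsTo_isOpen hopen
    (fun _ _ => lipschitzOnWith_hilbertHamVF_compl_tsupport V)
    (hγ.mono Icc_subset_Ici_self)
    ((isIntegralCurveOn_freeMotion hray).mono Icc_subset_Ici_self)
    (fun t ht => hray t ht.1) hinit (right_mem_Icc.2 hT)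

theorem escape_lemma_general {γ : ℝ → H × H} {R E : ℝ} {x₀ ξ₀ : H}
    (hγ : IsIntegralCurveOn γ (fun _ => hilbertHamVF V) (Ici 0)) (hγ₀ : γ 0 = (x₀, ξ₀))
    (hsupp : tsupport V ⊆ Metric.ball 0 R) (hE : 0 < E)
    (hx₀ : R ≤ ‖x₀‖) (hout : 0 ≤ ⟪x₀, ξ₀⟫) (hp : ‖ξ₀‖ ^ 2 + V x₀ = E) :
    (∀ t : ℝ, 0 ≤ t →
        γ t = (x₀ + (2 * t) • ξ₀, ξ₀) ∧
          ‖x₀ + (2 * t) • ξ₀‖ ^ 2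
            = ‖x₀‖ ^ 2 + 4 * t * ⟪x₀, ξ₀⟫ + 4 * t ^ 2 * E) ∧
      Tendsto (fun t => ‖γ t‖) atTop atTop := by
  have hoff {x : H} (hx : R ≤ ‖x‖) : x ∉ tsupport V := fun hmem =>
    hx.not_gt (mem_ball_zero_iff.1 (hsupp hmem))
  have hkinetic : ‖ξ₀‖ ^ 2 = E := by
    rwa [image_eq_zero_of_notMem_tsupport (hoff hx₀), add_zero] at hp
  have hξ₀ : ξ₀ ≠ 0 := by
    rintro rfl
    simp [hE.ne] at hkinetic
  have hfree : EqOn γ (freeMotion x₀ ξ₀) (Ici 0) :=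
    eqOn_freeMotion_of_forall_notMem_tsupport hγ hγ₀ fun t (ht : 0 ≤ t) =>
      hoff (hx₀.trans (norm_le_norm_add_smul_of_inner_nonneg hout (by positivity)))
  refine ⟨fun t ht => ⟨hfree ht, ?_⟩, ?_⟩
  · rw [norm_add_smul_sq_real, hkinetic]
    ring
  · refine (tendsto_norm_freeMotion_atTop x₀ hξ₀).congr' ?_
    filter_upwards [eventually_ge_atTop 0] with t ht
    rw [hfree ht]

end HamiltonianField

/-- Escape lemma: a trajectory starting outside the support of `V`, pointing
outwards, at positive energy `E`, is free for all `t ≥ 0` and escapes to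
infinity. -/
theorem escape_lemma (n : ℕ) (hn : 1 ≤ n)
    (V : EuclideanSpace ℝ (Fin n) → ℝ) (hV : ContDiff ℝ (⊤ : ℕ∞) V)
    (hVsupp : HasCompactSupport V)
    (Φ : ℝ → Phase n → Phase n) (hΦ : IsHamFlow V Φ)
    (R : ℝ) (hR : 0 < R)
    (hsupp : tsupport V ⊆ Metric.ball (0 : EuclideanSpace ℝ (Fin n)) R)
    (E : ℝ) (hE : 0 < E) (x₀ ξ₀ : EuclideanSpace ℝ (Fin n))
    (hx₀ : R ≤ ‖x₀‖) (hout : 0 ≤ ⟪x₀, ξ₀⟫) (hp : ham V (x₀, ξ₀) = E) :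
    (∀ t : ℝ, 0 ≤ t →
        Φ t (x₀, ξ₀) = (x₀ + (2 * t) • ξ₀, ξ₀) ∧
          ‖x₀ + (2 * t) • ξ₀‖ ^ 2
            = ‖x₀‖ ^ 2 + 4 * t * ⟪x₀, ξ₀⟫ + 4 * t ^ 2 * E) ∧
      Tendsto (fun t => ‖Φ t (x₀, ξ₀)‖) atTop atTop :=
  escape_lemma_general (fun t _ => (hΦ.2.2 (x₀, ξ₀) t).hasDerivWithinAt) (hΦ.1 (x₀, ξ₀))
    hsupp hE hx₀ hout hp
end
end

section
/- For E > 0, a point of the energy surface is forward-trapped if and only if its forward orbit is bounded: Γ_-(E) = {ρ ∈ p^{-1}(E) : sup_{t ≥ 0} ‖Φ_t(ρ)‖ < ∞}. Symmetrically, Γ_+(E) = {ρ ∈ p^{-1}(E) : sup_{t ≤ 0} ‖Φ_t(ρ)‖ < ∞}. -/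
open Filter Set
open scoped Topology RealInnerProductSpace

noncomputable section

/-!
Along a trajectory `(x, ξ)` one has `d²/dt² ‖x‖² = 8‖ξ‖² - 4⟪x, ∇V(x)⟫`, which is nonnegative as
long as `x` stays outside a ball beyond which the force `-∇V` does not pull inwards. Truncating
`‖x‖²` from below at the squared radius of this ball therefore gives a function of time that is
convex on all of `ℝ`, and a convex function is either bounded above on a half-line or tends to
infinity along it. In the first case energy conservation bounds `ξ` as well.
-/

theorem nonpos_of_hasDerivAt2_nonneg_of_pos {u u' u'' : ℝ → ℝ} {a b : ℝ}
    (hcont : ContinuousOn u (Icc a b)) (hu : ∀ t ∈ Ioo a b, HasDerivAt u (u' t) t)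
    (hu' : ∀ t ∈ Ioo a b, HasDerivAt u' (u'' t) t)
    (hu'' : ∀ t ∈ Ioo a b, 0 < u t → 0 ≤ u'' t) (ha : u a ≤ 0) (hb : u b ≤ 0)
    {t : ℝ} (ht : t ∈ Icc a b) : u t ≤ 0 := by
  by_contra! hpos
  have compact_nonpos {c d : ℝ} (h : Icc c d ⊆ Icc a b) :
      IsCompact (Icc c d ∩ u ⁻¹' Iic 0) :=
    isCompact_Icc.of_isClosed_subset
      ((hcont.mono h).preimage_isClosed_of_isClosed isClosed_Icc isClosed_Iic) inter_subset_left
  -- `(c, d)` is the component of `{u > 0}` containing `t`; there `u` is convex.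
  obtain ⟨c, ⟨⟨hac, hct⟩, hc⟩, hc_last⟩ :=
    (compact_nonpos (Icc_subset_Icc_right ht.2)).exists_isGreatest ⟨a, ⟨le_rfl, ht.1⟩, ha⟩
  obtain ⟨d, ⟨⟨htd, hdb⟩, hd⟩, hd_first⟩ :=
    (compact_nonpos (Icc_subset_Icc_left ht.1)).exists_isLeast ⟨b, ⟨ht.2, le_rfl⟩, hb⟩
  have pos_between {s : ℝ} (hs : s ∈ Ioo c d) : 0 < u s := by
    by_contra! hs_nonpos
    rcases le_total s t with hst | hts
    · exact hs.1.not_ge (hc_last ⟨⟨hac.trans hs.1.le, hst⟩, hs_nonpos⟩)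
    · exact hs.2.not_ge (hd_first ⟨⟨hts, hs.2.le.trans hdb⟩, hs_nonpos⟩)
  have hsub : Ioo c d ⊆ Ioo a b := Ioo_subset_Ioo hac hdb
  have hconv : ConvexOn ℝ (Icc c d) u := by
    refine convexOn_of_hasDerivWithinAt2_nonneg (f' := u') (f'' := u'') (convex_Icc c d)
      (hcont.mono (Icc_subset_Icc hac hdb)) ?_ ?_ ?_ <;> rw [interior_Icc] <;> intro s hs
    · exact (hu s (hsub hs)).hasDerivWithinAt
    · exact (hu' s (hsub hs)).hasDerivWithinAt
    · exact hu'' s (hsub hs) (pos_between hs)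
  have hcd : c ≤ d := hct.trans htd
  exact hpos.not_ge <| (hconv.le_max_of_mem_Icc ⟨le_rfl, hcd⟩ ⟨hcd, le_rfl⟩ ⟨hct, htd⟩).trans
    (max_le hc hd)

theorem le_affine_of_hasDerivAt2_nonneg_of_lt {f f' f'' : ℝ → ℝ} {a b c k M : ℝ}
    (hf : ∀ t, HasDerivAt f (f' t) t) (hf' : ∀ t, HasDerivAt f' (f'' t) t)
    (hf'' : ∀ t, M < f t → 0 ≤ f'' t) (hM : ∀ t ∈ Icc a b, M ≤ c + k * t)
    (ha : f a ≤ c + k * a) (hb : f b ≤ c + k * b) {t : ℝ} (ht : t ∈ Icc a b) :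
    f t ≤ c + k * t := by
  have hsub (s : ℝ) : HasDerivAt (fun s ↦ f s - (c + k * s)) (f' s - k) s := by
    have haffine := ((hasDerivAt_id s).const_mul k).const_add c
    rw [mul_one] at haffine
    exact (hf s).sub haffine
  refine sub_nonpos.1 <| nonpos_of_hasDerivAt2_nonneg_of_pos
    (fun s _ ↦ (hsub s).continuousAt.continuousWithinAt) (fun s _ ↦ hsub s)
    (fun s _ ↦ (hf' s).sub_const k) (fun s hs hpos ↦ hf'' s ?_)
    (sub_nonpos.2 ha) (sub_nonpos.2 hb) ht
  exact (hM s (Ioo_subset_Icc_self hs)).trans_lt (sub_pos.1 hpos)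

theorem convexOn_max_const_of_hasDerivAt2_nonneg {f f' f'' : ℝ → ℝ} {M : ℝ}
    (hf : ∀ t, HasDerivAt f (f' t) t) (hf' : ∀ t, HasDerivAt f' (f'' t) t)
    (hf'' : ∀ t, M < f t → 0 ≤ f'' t) : ConvexOn ℝ univ fun t ↦ max (f t) M := by
  refine LinearOrder.convexOn_of_lt convex_univ fun x _ y _ hxy a b ha hb hab ↦ ?_
  set X := max (f x) M
  set Y := max (f y) M
  set k := (Y - X) / (y - x)
  have chord_combo {p q : ℝ} (hpq : p + q = 1) :
      X - k * x + k * (p * x + q * y) = p * X + q * Y := by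
    have hkxy : k * (y - x) = Y - X := div_mul_cancel₀ _ (sub_pos.2 hxy).ne'
    linear_combination (k * x - X) * hpq + q * hkxy
  have le_chord {t : ℝ} (ht : t ∈ Icc x y) : M ≤ X - k * x + k * t := by
    rw [← segment_eq_Icc hxy.le] at ht
    obtain ⟨p, q, hp, hq, hpq, rfl⟩ := ht
    have hcombo : M ≤ p * X + q * Y :=
      convex_Ici M (le_max_right (f x) M) (le_max_right (f y) M) hp hq hpq
    exact hcombo.trans_eq (chord_combo hpq).symm
  have hx : f x ≤ X - k * x + k * x := (le_max_left (f x) M).trans_eq (by ring)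
  have hy : f y ≤ X - k * x + k * y :=
    (le_max_left (f y) M).trans_eq (by simpa using (chord_combo (zero_add 1)).symm)
  have hmem : a * x + b * y ∈ Icc x y :=
    convex_Icc x y ⟨le_rfl, hxy.le⟩ ⟨hxy.le, le_rfl⟩ ha.le hb.le hab
  simp only [smul_eq_mul]
  rw [← chord_combo hab]
  exact max_le (le_affine_of_hasDerivAt2_nonneg_of_lt hf hf' hf'' (fun _ ↦ le_chord) hx hy hmem)
    (le_chord hmem)

theorem tendsto_atTop_atTop_of_convexOn_Ici {f : ℝ → ℝ} {a : ℝ} (hf : ConvexOn ℝ (Ici a) f)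
    (hunbdd : ¬ BddAbove (f '' Ici a)) : Tendsto f atTop atTop := by
  obtain ⟨b, hab, hlt⟩ : ∃ b, a ≤ b ∧ f a < f b := by
    by_contra! hle
    exact hunbdd ⟨f a, forall_mem_image.2 hle⟩
  replace hab : a < b := hab.lt_of_ne (by rintro rfl; exact hlt.false)
  set slope := (f b - f a) / (b - a)
  have slope_pos : 0 < slope := div_pos (sub_pos.2 hlt) (sub_pos.2 hab)
  have secant_le {t : ℝ} (hbt : b ≤ t) : f a + slope * (t - a) ≤ f t := by
    have hat : a < t := hab.trans_le hbt
    have : slope ≤ (f t - f a) / (t - a) :=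
      hf.secant_mono (mem_Ici.2 le_rfl) hab.le hat.le hab.ne' hat.ne' hbt
    rw [le_div_iff₀ (sub_pos.2 hat)] at this
    linarith
  refine tendsto_atTop_mono' _ ((eventually_ge_atTop b).mono fun t ↦ secant_le) ?_
  exact tendsto_atTop_add_const_left _ _
    ((tendsto_atTop_add_const_right _ (-a) tendsto_id).const_mul_atTop slope_pos)

theorem tendsto_atBot_atTop_of_convexOn_Iic {f : ℝ → ℝ} {a : ℝ} (hf : ConvexOn ℝ (Iic a) f)
    (hunbdd : ¬ BddAbove (f '' Iic a)) : Tendsto f atBot atTop := by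
  have hneg : ConvexOn ℝ (Ici (-a)) fun t ↦ f (-t) := by
    have hpre : (-LinearMap.id : ℝ →ₗ[ℝ] ℝ) ⁻¹' Iic a = Ici (-a) := by ext; simp [neg_le]
    exact hpre ▸ hf.comp_linearMap (-LinearMap.id)
  have hunbdd_neg : ¬ BddAbove ((fun t ↦ f (-t)) '' Ici (-a)) := by
    simpa [← image_image f Neg.neg] using hunbdd
  simpa [Function.comp_def] using
    (tendsto_atTop_atTop_of_convexOn_Ici hneg hunbdd_neg).comp tendsto_neg_atBot_atTop

theorem tendsto_norm_of_tendsto_max_norm_sq_fst {ι F G : Type*} [SeminormedAddCommGroup F]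
    [SeminormedAddCommGroup G] {l : Filter ι} {γ : ι → F × G} {M : ℝ}
    (h : Tendsto (fun t ↦ max (‖(γ t).1‖ ^ 2) M) l atTop) :
    Tendsto (fun t ↦ ‖γ t‖) l atTop := by
  refine tendsto_atTop.2 fun C ↦ ?_
  filter_upwards [h.eventually_gt_atTop (max (C ^ 2) M)] with t ht
  have hsq : C ^ 2 < ‖(γ t).1‖ ^ 2 := lt_of_not_ge fun hle ↦ ht.not_ge (max_le_max_right M hle)
  exact (lt_of_pow_lt_pow_left₀ 2 (norm_nonneg _) hsq).le.trans (norm_fst_le _)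

theorem not_tendsto_norm_of_isBounded_image {ι F : Type*} [SeminormedAddCommGroup F]
    {l : Filter ι} [l.NeBot] {γ : ι → F} {s : Set ι} (hs : s ∈ l)
    (h : Bornology.IsBounded (γ '' s)) : ¬ Tendsto (fun t ↦ ‖γ t‖) l atTop := by
  intro hγ
  obtain ⟨C, hC⟩ := h.exists_norm_le
  obtain ⟨t, hts, ht⟩ := ((eventually_mem_set.2 hs).and (hγ.eventually_gt_atTop C)).exists
  exact ht.not_ge (hC _ (mem_image_of_mem γ hts))

theorem eventually_gradient_eq_zero_of_hasCompactSupport {F : Type*} [NormedAddCommGroup F]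
    [InnerProductSpace ℝ F] [CompleteSpace F] {V : F → ℝ} (hV : HasCompactSupport V) :
    ∀ᶠ x in Bornology.cobounded F, gradient V x = 0 := by
  filter_upwards [hV.isCompact.isBounded] with x hx
  have hfderiv : fderiv ℝ V x = 0 :=
    Function.notMem_support.1 fun h ↦ hx (support_fderiv_subset ℝ h)
  simp [gradient, hfderiv]

section Trajectory

variable {n : ℕ} {V : EuclideanSpace ℝ (Fin n) → ℝ} {γ : ℝ → Phase n}

theorem isBounded_setOf_ham_eq_and_fst_mem (hV : Continuous V) (E : ℝ)
    {s : Set (EuclideanSpace ℝ (Fin n))} (hs : Bornology.IsBounded s) :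
    Bornology.IsBounded {ρ : Phase n | ham V ρ = E ∧ ρ.1 ∈ s} := by
  obtain ⟨B, hB⟩ := hs.isCompact_closure.bddBelow_image hV.continuousOn
  have hsub : {ρ : Phase n | ham V ρ = E ∧ ρ.1 ∈ s} ⊆ s ×ˢ Metric.closedBall 0 (√(E - B)) := by
    rintro ρ ⟨hρE, hρs⟩
    have hVB : B ≤ V ρ.1 := hB (mem_image_of_mem V (subset_closure hρs))
    refine ⟨hρs, mem_closedBall_zero_iff.2 (Real.le_sqrt_of_sq_le ?_)⟩
    unfold ham at hρE
    linarith
  exact (hs.prod Metric.isBounded_closedBall).subset hsub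

theorem hasDerivAt_fst_of_isIntegralCurve (hγ : IsIntegralCurve γ fun _ ↦ hamVF V) (t : ℝ) :
    HasDerivAt (fun s ↦ (γ s).1) ((2 : ℝ) • (γ t).2) t :=
  (hγ t).fst

theorem hasDerivAt_snd_of_isIntegralCurve (hγ : IsIntegralCurve γ fun _ ↦ hamVF V) (t : ℝ) :
    HasDerivAt (fun s ↦ (γ s).2) (-gradient V (γ t).1) t :=
  (hγ t).snd

theorem ham_eq_of_isIntegralCurve (hV : Differentiable ℝ V)
    (hγ : IsIntegralCurve γ fun _ ↦ hamVF V) (s t : ℝ) : ham V (γ s) = ham V (γ t) := by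
  have hderiv (t : ℝ) : HasDerivAt (fun s ↦ ham V (γ s)) 0 t := by
    have hkinetic := (hasDerivAt_snd_of_isIntegralCurve hγ t).norm_sq
    have hpotential := (hV (γ t).1).hasGradientAt.hasFDerivAt.comp_hasDerivAt t
      (hasDerivAt_fst_of_isIntegralCurve hγ t)
    refine (hkinetic.add hpotential).congr_deriv ?_
    simp
  exact is_const_of_deriv_eq_zero (fun t ↦ (hderiv t).differentiableAt)
    (fun t ↦ (hderiv t).deriv) s t

theorem hasDerivAt_norm_sq_fst (hγ : IsIntegralCurve γ fun _ ↦ hamVF V) (t : ℝ) :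
    HasDerivAt (fun s ↦ ‖(γ s).1‖ ^ 2) (4 * ⟪(γ t).1, (γ t).2⟫) t := by
  refine (hasDerivAt_fst_of_isIntegralCurve hγ t).norm_sq.congr_deriv ?_
  rw [inner_smul_right]
  ring

theorem hasDerivAt_inner_fst_snd (hγ : IsIntegralCurve γ fun _ ↦ hamVF V) (t : ℝ) :
    HasDerivAt (fun s ↦ ⟪(γ s).1, (γ s).2⟫)
      (2 * ‖(γ t).2‖ ^ 2 - ⟪(γ t).1, gradient V (γ t).1⟫) t := by
  refine ((hasDerivAt_fst_of_isIntegralCurve hγ t).inner ℝ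
    (hasDerivAt_snd_of_isIntegralCurve hγ t)).congr_deriv ?_
  rw [inner_neg_right, real_inner_smul_left, real_inner_self_eq_norm_sq]
  ring

theorem exists_convexOn_max_norm_sq_fst
    (hrep : ∀ᶠ x in Bornology.cobounded _, ⟪x, gradient V x⟫ ≤ 0)
    (hγ : IsIntegralCurve γ fun _ ↦ hamVF V) :
    ∃ M, ConvexOn ℝ univ fun t ↦ max (‖(γ t).1‖ ^ 2) M := by
  obtain ⟨R, -, hR⟩ := hasBasis_cobounded_norm.eventually_iff.1 hrep
  refine ⟨R ^ 2, convexOn_max_const_of_hasDerivAt2_nonneg (hasDerivAt_norm_sq_fst hγ)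
    (fun t ↦ (hasDerivAt_inner_fst_snd hγ t).const_mul 4) fun t ht ↦ ?_⟩
  have hinner : ⟪(γ t).1, gradient V (γ t).1⟫ ≤ 0 :=
    hR (lt_of_pow_lt_pow_left₀ 2 (norm_nonneg _) ht).le
  linarith [sq_nonneg ‖(γ t).2‖]

theorem isBounded_image_of_bddAbove_max_norm_sq_fst (hV : Differentiable ℝ V)
    (hγ : IsIntegralCurve γ fun _ ↦ hamVF V) {s : Set ℝ} {M : ℝ}
    (h : BddAbove ((fun t ↦ max (‖(γ t).1‖ ^ 2) M) '' s)) : Bornology.IsBounded (γ '' s) := by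
  obtain ⟨C, hC⟩ := h
  refine (isBounded_setOf_ham_eq_and_fst_mem hV.continuous (ham V (γ 0))
    (Metric.isBounded_closedBall (x := 0) (r := √C))).subset ?_
  rintro _ ⟨t, ht, rfl⟩
  refine ⟨ham_eq_of_isIntegralCurve hV hγ t 0, mem_closedBall_zero_iff.2 ?_⟩
  exact Real.le_sqrt_of_sq_le ((le_max_left _ _).trans (hC (mem_image_of_mem _ ht)))

theorem not_tendsto_norm_atTop_iff_isBounded (hV : Differentiable ℝ V)
    (hrep : ∀ᶠ x in Bornology.cobounded _, ⟪x, gradient V x⟫ ≤ 0)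
    (hγ : IsIntegralCurve γ fun _ ↦ hamVF V) :
    ¬ Tendsto (fun t ↦ ‖γ t‖) atTop atTop ↔ Bornology.IsBounded (γ '' Ici 0) := by
  refine ⟨fun hnot ↦ ?_, not_tendsto_norm_of_isBounded_image (Ici_mem_atTop 0)⟩
  obtain ⟨M, hconv⟩ := exists_convexOn_max_norm_sq_fst hrep hγ
  by_contra hunbdd
  exact hnot <| tendsto_norm_of_tendsto_max_norm_sq_fst <|
    tendsto_atTop_atTop_of_convexOn_Ici (hconv.subset (subset_univ _) (convex_Ici 0)) <|
      mt (isBounded_image_of_bddAbove_max_norm_sq_fst hV hγ) hunbdd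

theorem not_tendsto_norm_atBot_iff_isBounded (hV : Differentiable ℝ V)
    (hrep : ∀ᶠ x in Bornology.cobounded _, ⟪x, gradient V x⟫ ≤ 0)
    (hγ : IsIntegralCurve γ fun _ ↦ hamVF V) :
    ¬ Tendsto (fun t ↦ ‖γ t‖) atBot atTop ↔ Bornology.IsBounded (γ '' Iic 0) := by
  refine ⟨fun hnot ↦ ?_, not_tendsto_norm_of_isBounded_image (Iic_mem_atBot 0)⟩
  obtain ⟨M, hconv⟩ := exists_convexOn_max_norm_sq_fst hrep hγ
  by_contra hunbdd
  exact hnot <| tendsto_norm_of_tendsto_max_norm_sq_fst <|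
    tendsto_atBot_atTop_of_convexOn_Iic (hconv.subset (subset_univ _) (convex_Iic 0)) <|
      mt (isBounded_image_of_bddAbove_max_norm_sq_fst hV hγ) hunbdd

end Trajectory

theorem trapped_iff_bounded_orbit_general {n : ℕ} {V : EuclideanSpace ℝ (Fin n) → ℝ}
    (hV : Differentiable ℝ V)
    (hrep : ∀ᶠ x in Bornology.cobounded _, ⟪x, gradient V x⟫ ≤ 0)
    {Φ : ℝ → Phase n → Phase n} (hΦ : IsHamFlow V Φ) (E : ℝ) :
    GammaMinus V Φ E
        = {ρ : Phase n | ham V ρ = E ∧ ∃ C : ℝ, ∀ t : ℝ, 0 ≤ t → ‖Φ t ρ‖ ≤ C} ∧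
      GammaPlus V Φ E
        = {ρ : Phase n | ham V ρ = E ∧ ∃ C : ℝ, ∀ t : ℝ, t ≤ 0 → ‖Φ t ρ‖ ≤ C} := by
  have hγ (ρ : Phase n) : IsIntegralCurve (fun t ↦ Φ t ρ) fun _ ↦ hamVF V := hΦ.2.2 ρ
  constructor <;> ext ρ <;> refine and_congr_right fun _ ↦ ?_
  · rw [not_tendsto_norm_atTop_iff_isBounded hV hrep (hγ ρ)]
    simp only [isBounded_iff_forall_norm_le, forall_mem_image, mem_Ici]
  · rw [not_tendsto_norm_atBot_iff_isBounded hV hrep (hγ ρ)]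
    simp only [isBounded_iff_forall_norm_le, forall_mem_image, mem_Iic]

/-- A point of the energy surface is forward-trapped iff its forward orbit is
bounded, and backward-trapped iff its backward orbit is bounded. -/
theorem trapped_iff_bounded_orbit (n : ℕ) (hn : 1 ≤ n)
    (V : EuclideanSpace ℝ (Fin n) → ℝ) (hV : ContDiff ℝ (⊤ : ℕ∞) V)
    (hVsupp : HasCompactSupport V)
    (Φ : ℝ → Phase n → Phase n) (hΦ : IsHamFlow V Φ)
    (E : ℝ) (hE : 0 < E) :
    GammaMinus V Φ E
        = {ρ : Phase n | ham V ρ = E ∧ ∃ C : ℝ, ∀ t : ℝ, 0 ≤ t → ‖Φ t ρ‖ ≤ C} ∧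
      GammaPlus V Φ E
        = {ρ : Phase n | ham V ρ = E ∧ ∃ C : ℝ, ∀ t : ℝ, t ≤ 0 → ‖Φ t ρ‖ ≤ C} := by
  have hrep : ∀ᶠ x in Bornology.cobounded _, ⟪x, gradient V x⟫ ≤ 0 :=
    (eventually_gradient_eq_zero_of_hasCompactSupport hVsupp).mono fun x hx ↦ by simp [hx]
  exact trapped_iff_bounded_orbit_general (hV.differentiable (by simp)) hrep hΦ E
end
end

section
/- Dichotomy for forward trajectories: for E > 0 and every ρ ∈ p^{-1}(E), either ‖Φ_t(ρ)‖ → ∞ as t → +∞, or the forward orbit {Φ_t(ρ) : t ≥ 0} is bounded. In particular, if ρ ∈ p^{-1}(E) \ Γ_-(E) then ‖Φ_t(ρ)‖ → ∞ as t → +∞. -/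
open Filter Set
open scoped Topology RealInnerProductSpace

noncomputable section

/-!
Along a trajectory put `f = ‖x‖²`. Then `f' = 4⟪x, ξ⟫`, and by conservation of energy
`f'' = 4 (2 (E - V x) - ⟪x, ∇V x⟫)`, which is bounded below by a positive constant far from the
origin: where `V` vanishes it equals `8E`. Hence a trajectory that is ever far away with `f' ≥ 0`
stays far away, and `f` grows quadratically. Otherwise `f' < 0` whenever the trajectory is far
away, so `f` never climbs out of a fixed ball, while `ξ` is bounded by conservation of energy.
-/

section RealFunctions

variable {f f' f'' : ℝ → ℝ} {a b c R : ℝ}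

theorem add_mul_sub_le_of_le_deriv (hab : a ≤ b)
    (hf : ∀ t ∈ Icc a b, HasDerivWithinAt f (f' t) (Icc a b) t)
    (hc : ∀ t ∈ Ico a b, c ≤ f' t) : f a + c * (b - a) ≤ f b := by
  have line_deriv (t : ℝ) : HasDerivAt (fun s ↦ f a + c * (s - a)) c t := by
    simpa using (((hasDerivAt_id t).sub_const a).const_mul c).const_add (f a)
  exact image_le_of_deriv_right_le_deriv_boundary
    (fun t _ ↦ (line_deriv t).continuousAt.continuousWithinAt)
    (fun t _ ↦ (line_deriv t).hasDerivWithinAt) (by simp)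
    (fun t ht ↦ (hf t ht).continuousWithinAt)
    (fun t ht ↦ (hf t (Ico_subset_Icc_self ht)).mono_of_mem_nhdsWithin
      (Icc_mem_nhdsGE_of_mem ht))
    hc (right_mem_Icc.2 hab)

theorem add_mul_sub_add_sq_le_of_le_deriv_deriv (hab : a ≤ b)
    (hf : ∀ t ∈ Icc a b, HasDerivWithinAt f (f' t) (Icc a b) t)
    (hf' : ∀ t ∈ Icc a b, HasDerivWithinAt f' (f'' t) (Icc a b) t)
    (hc : ∀ t ∈ Ico a b, c ≤ f'' t) :
    f a + f' a * (b - a) + c / 2 * (b - a) ^ 2 ≤ f b := by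
  have deriv_ge : ∀ t ∈ Ico a b, f' a + c * (t - a) ≤ f' t := fun t ht ↦
    have hsub : Icc a t ⊆ Icc a b := Icc_subset_Icc_right ht.2.le
    add_mul_sub_le_of_le_deriv ht.1 (fun s hs ↦ (hf' s (hsub hs)).mono hsub)
      fun s hs ↦ hc s ⟨hs.1, hs.2.trans ht.2⟩
  have sub_deriv : ∀ t ∈ Icc a b,
      HasDerivWithinAt (fun s ↦ f s - (f' a * (s - a) + c / 2 * (s - a) ^ 2))
        (f' t - (f' a + c * (t - a))) (Icc a b) t := fun t ht ↦ by
    have lin := (hasDerivAt_id t).sub_const a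
    refine (hf t ht).sub
      (((lin.const_mul (f' a)).add ((lin.pow 2).const_mul (c / 2))).congr_deriv ?_).hasDerivWithinAt
    simp only [id]
    ring
  have := add_mul_sub_le_of_le_deriv (c := 0) hab sub_deriv fun t ht ↦
    sub_nonneg.2 (deriv_ge t ht)
  linarith

theorem lt_of_deriv_deriv_nonneg_of_lt
    (hf : ∀ t ∈ Ici a, HasDerivWithinAt f (f' t) (Ici a) t)
    (hf' : ∀ t ∈ Ici a, HasDerivWithinAt f' (f'' t) (Ici a) t)
    (hf'' : ∀ t ∈ Ici a, R < f t → 0 ≤ f'' t) (ha : R < f a) (ha' : 0 ≤ f' a) :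
    ∀ t ∈ Ici a, R < f t := by
  by_contra! ⟨t, ht, hft⟩
  let exitTimes : Set ℝ := {s ∈ Ici a | f s ∈ Iic R}
  have bddBelow_exitTimes : BddBelow exitTimes := ⟨a, fun s hs ↦ hs.1⟩
  have isClosed_exitTimes : IsClosed exitTimes :=
    ContinuousOn.preimage_isClosed_of_isClosed (fun s hs ↦ (hf s hs).continuousWithinAt)
      isClosed_Ici isClosed_Iic
  obtain ⟨hexit, hfexit⟩ : sInf exitTimes ∈ exitTimes :=
    isClosed_exitTimes.csInf_mem ⟨t, ht, hft⟩ bddBelow_exitTimes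
  have lt_before_exit : ∀ s ∈ Ico a (sInf exitTimes), R < f s := fun s hs ↦
    not_le.1 fun hfs ↦ hs.2.not_ge (csInf_le bddBelow_exitTimes ⟨hs.1, hfs⟩)
  have taylor := add_mul_sub_add_sq_le_of_le_deriv_deriv hexit
    (fun s hs ↦ (hf s hs.1).mono Icc_subset_Ici_self)
    (fun s hs ↦ (hf' s hs.1).mono Icc_subset_Ici_self)
    fun s hs ↦ hf'' s hs.1 (lt_before_exit s hs)
  have : 0 ≤ f' a * (sInf exitTimes - a) := mul_nonneg ha' (sub_nonneg.2 hexit)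
  have : f (sInf exitTimes) ≤ R := hfexit
  linarith

theorem tendsto_atTop_of_le_deriv_deriv_of_lt
    (hf : ∀ t ∈ Ici a, HasDerivWithinAt f (f' t) (Ici a) t)
    (hf' : ∀ t ∈ Ici a, HasDerivWithinAt f' (f'' t) (Ici a) t) (hc : 0 < c)
    (hf'' : ∀ t ∈ Ici a, R < f t → c ≤ f'' t) (ha : R < f a) (ha' : 0 ≤ f' a) :
    Tendsto f atTop atTop := by
  have lt_f := lt_of_deriv_deriv_nonneg_of_lt hf hf'
    (fun t ht hft ↦ hc.le.trans (hf'' t ht hft)) ha ha'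
  have quadratic_le : ∀ t ∈ Ici a, f a + c / 2 * (t - a) ^ 2 ≤ f t := fun t ht ↦ by
    have taylor := add_mul_sub_add_sq_le_of_le_deriv_deriv ht
      (fun s hs ↦ (hf s hs.1).mono Icc_subset_Ici_self)
      (fun s hs ↦ (hf' s hs.1).mono Icc_subset_Ici_self)
      fun s hs ↦ hf'' s hs.1 (lt_f s hs.1)
    have : 0 ≤ f' a * (t - a) := mul_nonneg ha' (sub_nonneg.2 ht)
    linarith
  have quadratic_tendsto : Tendsto (fun t ↦ f a + c / 2 * (t - a) ^ 2) atTop atTop :=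
    tendsto_atTop_add_const_left _ _ <| Tendsto.const_mul_atTop (half_pos hc) <|
      (tendsto_pow_atTop two_ne_zero).comp <| tendsto_atTop_add_const_right _ (-a) tendsto_id
  exact tendsto_atTop_mono' _ ((eventually_ge_atTop a).mono quadratic_le) quadratic_tendsto

theorem le_max_of_deriv_neg_of_lt
    (hf : ∀ t ∈ Ici a, HasDerivWithinAt f (f' t) (Ici a) t)
    (hf' : ∀ t ∈ Ici a, R < f t → f' t < 0) : ∀ t ∈ Ici a, f t ≤ max R (f a) := by
  refine fun t ht ↦ le_of_forall_pos_le_add fun ε hε ↦ ?_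
  refine image_le_of_deriv_right_lt_deriv_boundary (B := fun _ ↦ max R (f a) + ε) (B' := 0)
    (fun s hs ↦ ((hf s hs.1).mono Icc_subset_Ici_self).continuousWithinAt)
    (fun s hs ↦ (hf s hs.1).mono (Ici_subset_Ici.2 hs.1))
    (by linarith [le_max_right R (f a)]) (fun s ↦ hasDerivAt_const s _)
    (fun s hs hfs ↦ hf' s hs.1 ?_) (right_mem_Icc.2 ht)
  linarith [le_max_left R (f a)]

end RealFunctions

section Trajectories

variable {F : Type*} [NormedAddCommGroup F] [InnerProductSpace ℝ F] [CompleteSpace F]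

/-- `x` and `ξ` solve Hamilton's equations `x' = 2ξ`, `ξ' = -∇V(x)` of `‖ξ‖² + V(x)` for times
`t ≥ 0`, with one-sided derivatives at `t = 0`. It makes sense in any real Hilbert space. -/
structure IsForwardTrajectory (V : F → ℝ) (x ξ : ℝ → F) : Prop where
  hasDerivWithinAt_position : ∀ t ∈ Ici 0, HasDerivWithinAt x ((2 : ℝ) • ξ t) (Ici 0) t
  hasDerivWithinAt_momentum : ∀ t ∈ Ici 0, HasDerivWithinAt ξ (-gradient V (x t)) (Ici 0) t

variable {V : F → ℝ} {x ξ : ℝ → F} {E R c : ℝ}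

namespace IsForwardTrajectory

theorem energy_eq (h : IsForwardTrajectory V x ξ) (hV : Differentiable ℝ V) :
    ∀ t ∈ Ici 0, ‖ξ t‖ ^ 2 + V (x t) = ‖ξ 0‖ ^ 2 + V (x 0) := by
  have energy_deriv : ∀ t ∈ Ici 0,
      HasDerivWithinAt (fun s ↦ ‖ξ s‖ ^ 2 + V (x s)) 0 (Ici 0) t := fun t ht ↦ by
    have kinetic := (h.hasDerivWithinAt_momentum t ht).norm_sq
    have potential := (hV (x t)).hasFDerivAt.comp_hasDerivWithinAt t
      (h.hasDerivWithinAt_position t ht)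
    refine (kinetic.add potential).congr_deriv ?_
    rw [← inner_gradient_left, inner_neg_right, inner_smul_right, real_inner_comm]
    ring
  exact fun t ht ↦ constant_of_has_deriv_right_zero
    (fun s hs ↦ ((energy_deriv s hs.1).mono Icc_subset_Ici_self).continuousWithinAt)
    (fun s hs ↦ (energy_deriv s hs.1).mono (Ici_subset_Ici.2 hs.1)) t (right_mem_Icc.2 ht)

theorem hasDerivWithinAt_norm_sq (h : IsForwardTrajectory V x ξ) :
    ∀ t ∈ Ici 0, HasDerivWithinAt (fun s ↦ ‖x s‖ ^ 2) (4 * ⟪x t, ξ t⟫) (Ici 0) t :=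
  fun t ht ↦ (h.hasDerivWithinAt_position t ht).norm_sq.congr_deriv <| by
    rw [inner_smul_right]
    ring

theorem hasDerivWithinAt_inner (h : IsForwardTrajectory V x ξ) :
    ∀ t ∈ Ici 0, HasDerivWithinAt (fun s ↦ ⟪x s, ξ s⟫)
      (2 * ‖ξ t‖ ^ 2 - ⟪x t, gradient V (x t)⟫) (Ici 0) t :=
  fun t ht ↦ ((h.hasDerivWithinAt_position t ht).inner ℝ
    (h.hasDerivWithinAt_momentum t ht)).congr_deriv <| by
      rw [inner_neg_right, real_inner_smul_left, real_inner_self_eq_norm_sq]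
      ring

theorem tendsto_norm_position_atTop (h : IsForwardTrajectory V x ξ) (hV : Differentiable ℝ V)
    (hE : ‖ξ 0‖ ^ 2 + V (x 0) = E) (hc : 0 < c)
    (hvirial : ∀ y, R < ‖y‖ → c ≤ 2 * (E - V y) - ⟪y, gradient V y⟫)
    {a : ℝ} (ha : 0 ≤ a) (hfar : R ^ 2 < ‖x a‖ ^ 2) (hout : 0 ≤ ⟪x a, ξ a⟫) :
    Tendsto (fun t ↦ ‖x t‖) atTop atTop := by
  have hsub : Ici a ⊆ Ici 0 := Ici_subset_Ici.2 ha
  have norm_sq_tendsto : Tendsto (fun t ↦ ‖x t‖ ^ 2) atTop atTop := by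
    refine tendsto_atTop_of_le_deriv_deriv_of_lt (c := 4 * c) (R := R ^ 2)
      (fun t ht ↦ (h.hasDerivWithinAt_norm_sq t (hsub ht)).mono hsub)
      (fun t ht ↦ ((h.hasDerivWithinAt_inner t (hsub ht)).mono hsub).const_mul 4)
      (by positivity) (fun t ht hfar_t ↦ ?_) hfar (by positivity)
    have virial_t := hvirial (x t) (lt_of_pow_lt_pow_left₀ 2 (norm_nonneg _) hfar_t)
    have energy_t := (h.energy_eq hV t (hsub ht)).trans hE
    linarith
  simpa only [Function.comp_def, Real.sqrt_sq (norm_nonneg _)] using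
    Real.tendsto_sqrt_atTop.comp norm_sq_tendsto

theorem exists_norm_position_le (h : IsForwardTrajectory V x ξ)
    (hin : ∀ t ∈ Ici 0, R ^ 2 < ‖x t‖ ^ 2 → ⟪x t, ξ t⟫ < 0) :
    ∃ C, ∀ t ∈ Ici 0, ‖x t‖ ≤ C :=
  ⟨√(max (R ^ 2) (‖x 0‖ ^ 2)), fun t ht ↦ Real.le_sqrt_of_sq_le <|
    le_max_of_deriv_neg_of_lt h.hasDerivWithinAt_norm_sq
      (fun s hs hfar ↦ by linarith [hin s hs hfar]) t ht⟩

theorem exists_norm_momentum_le (h : IsForwardTrajectory V x ξ) (hV : Differentiable ℝ V)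
    (hVbdd : BddBelow (range V)) : ∃ C, ∀ t ∈ Ici 0, ‖ξ t‖ ≤ C := by
  obtain ⟨m, hm⟩ := hVbdd
  refine ⟨√(‖ξ 0‖ ^ 2 + V (x 0) - m), fun t ht ↦ Real.le_sqrt_of_sq_le ?_⟩
  linarith [h.energy_eq hV t ht, hm (mem_range_self (x t))]

end IsForwardTrajectory

theorem forward_dichotomy_general (h : IsForwardTrajectory V x ξ) (hV : Differentiable ℝ V)
    (hVbdd : BddBelow (range V)) (hE : ‖ξ 0‖ ^ 2 + V (x 0) = E) (hc : 0 < c)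
    (hvirial : ∀ y, R < ‖y‖ → c ≤ 2 * (E - V y) - ⟪y, gradient V y⟫) :
    Tendsto (fun t ↦ ‖(x t, ξ t)‖) atTop atTop ∨ ∃ C, ∀ t, 0 ≤ t → ‖(x t, ξ t)‖ ≤ C := by
  by_cases houtgoing : ∃ a ∈ Ici 0, R ^ 2 < ‖x a‖ ^ 2 ∧ 0 ≤ ⟪x a, ξ a⟫
  · obtain ⟨a, ha, hfar, hout⟩ := houtgoing
    exact .inl <| tendsto_atTop_mono (fun t ↦ norm_fst_le (x t, ξ t))
      (h.tendsto_norm_position_atTop hV hE hc hvirial ha hfar hout)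
  · push Not at houtgoing
    obtain ⟨Cx, hCx⟩ := h.exists_norm_position_le houtgoing
    obtain ⟨Cξ, hCξ⟩ := h.exists_norm_momentum_le hV hVbdd
    exact .inr ⟨max Cx Cξ, fun t ht ↦ max_le_max (hCx t ht) (hCξ t ht)⟩

theorem virial_eq_of_notMem_tsupport {y : F} (hy : y ∉ tsupport V) (E : ℝ) :
    2 * (E - V y) - ⟪y, gradient V y⟫ = 2 * E := by
  rw [inner_gradient_right, fderiv_of_notMem_tsupport ℝ hy, image_eq_zero_of_notMem_tsupport hy]
  simp

theorem exists_forall_lt_norm_virial_eq (hV : HasCompactSupport V) (E : ℝ) :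
    ∃ R, ∀ y, R < ‖y‖ → 2 * (E - V y) - ⟪y, gradient V y⟫ = 2 * E := by
  obtain ⟨R, hR⟩ := hV.isCompact.isBounded.subset_closedBall 0
  exact ⟨R, fun y hy ↦ virial_eq_of_notMem_tsupport
    (fun hmem ↦ hy.not_ge (mem_closedBall_zero_iff.1 (hR hmem))) E⟩

end Trajectories

theorem IsHamFlow.isForwardTrajectory {n : ℕ} {V : EuclideanSpace ℝ (Fin n) → ℝ}
    {Φ : ℝ → Phase n → Phase n} (hΦ : IsHamFlow V Φ) (ρ : Phase n) :
    IsForwardTrajectory V (fun t ↦ (Φ t ρ).1) (fun t ↦ (Φ t ρ).2) where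
  hasDerivWithinAt_position t _ := HasDerivAt.hasDerivWithinAt (hΦ.2.2 ρ t).fst
  hasDerivWithinAt_momentum t _ := HasDerivAt.hasDerivWithinAt (hΦ.2.2 ρ t).snd

/-- Dichotomy for forward trajectories at positive energy: either the trajectory
escapes to infinity, or its forward orbit is bounded.  In particular non-trapped
points of the energy surface escape. -/
theorem forward_dichotomy (n : ℕ) (hn : 1 ≤ n)
    (V : EuclideanSpace ℝ (Fin n) → ℝ) (hV : ContDiff ℝ (⊤ : ℕ∞) V)
    (hVsupp : HasCompactSupport V)
    (Φ : ℝ → Phase n → Phase n) (hΦ : IsHamFlow V Φ)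
    (E : ℝ) (hE : 0 < E) :
    (∀ ρ : Phase n, ham V ρ = E →
        Tendsto (fun t => ‖Φ t ρ‖) atTop atTop ∨
          ∃ C : ℝ, ∀ t : ℝ, 0 ≤ t → ‖Φ t ρ‖ ≤ C) ∧
      ∀ ρ : Phase n, ham V ρ = E → ρ ∉ GammaMinus V Φ E →
        Tendsto (fun t => ‖Φ t ρ‖) atTop atTop := by
  obtain ⟨R, hR⟩ := exists_forall_lt_norm_virial_eq hVsupp E
  refine ⟨fun ρ hρ ↦ ?_, fun ρ hρ hnotMem ↦ by_contra fun htrapped ↦ hnotMem ⟨hρ, htrapped⟩⟩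
  exact forward_dichotomy_general (hΦ.isForwardTrajectory ρ) (hV.differentiable (by simp))
    (hV.continuous.bddBelow_range_of_hasCompactSupport hVsupp)
    (by rwa [hΦ.1 ρ]) (mul_pos two_pos hE) fun y hy ↦ (hR y hy).ge
end
end
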